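/- Let k ≥ 4 be an integer and let G be a 3-connected k-regular graph of diameter at least 3. Then the set of proper k-colourings of G forms a single Kempe class. -/

import Mathlib

open SimpleGraph
open scoped Classical

variable {V : Type*}

/-- A proper `k`-colouring of `G`. -/
def IsProperColoring (G : SimpleGraph V) (k : ℕ) (c : V → Fin k) : Prop :=
  ∀ ⦃u v : V⦄, G.Adj u v → c u ≠ c v

/-- `c'` is obtained from `c` by a single Kempe change: the colours `a` and `b` are
swapped on the connected component (of the subgraph induced by the vertices coloured
`a` or `b`) containing `v0`, and all other vertices keep their colour. -/

def KempeStep (G : SimpleGraph V) (k : ℕ) (c c' : V → Fin k) : Prop :=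
  ∃ a b : Fin k, ∃ v0 : {x : V | c x = a ∨ c x = b},
    ∀ v : V, c' v =
      if h : c v = a ∨ c v = b then
        if (G.induce {x : V | c x = a ∨ c x = b}).Reachable v0 ⟨v, h⟩
          then Equiv.swap a b (c v) else c v
      else c v

/-- Two colourings are Kempe equivalent if one is obtained from the other by a finite
sequence of Kempe changes. -/
def KempeEquiv (G : SimpleGraph V) (k : ℕ) (c c' : V → Fin k) : Prop :=
  Relation.ReflTransGen (KempeStep G k) c c'

/-- The set of all proper `k`-colourings of `G` forms a single Kempe class. -/
def KempeClass (G : SimpleGraph V) (k : ℕ) : Prop :=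
  ∀ c c' : V → Fin k, IsProperColoring G k c → IsProperColoring G k c' →
    KempeEquiv G k c c'

/-- `G` is `d`-degenerate: every nonempty set of vertices contains a vertex with at
most `d` neighbours inside the set. -/
def Degenerate (G : SimpleGraph V) (d : ℕ) : Prop :=
  ∀ S : Set V, S.Nonempty → ∃ v ∈ S, (S ∩ G.neighborSet v).ncard ≤ d

/-- `G` is 3-connected: more than 3 vertices, and deleting any at most 2 vertices
leaves it connected. -/
def ThreeConnected [Fintype V] (G : SimpleGraph V) : Prop :=
  3 < Fintype.card V ∧ ∀ S : Set V, S.ncard ≤ 2 → (G.induce Sᶜ).Connected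

/-!
Identifying two vertices at distance two of a 3-connected `k`-regular graph gives a
`(k - 1)`-degenerate graph, whose `k`-colourings form a single Kempe class (Las Vergnas-Meyniel).
Hence all colourings giving equal colours to such a pair of vertices are Kempe equivalent.

If `u` and `v` are at distance at least three, then by the pigeonhole principle a colouring `α`
repeats a colour on two neighbours `a`, `b` of `u`, and a colouring `β` on two neighbours `c`, `d`
of `v`. If `α` and `β` are not Kempe equivalent, then no colouring has both repetitions, so giving
one colour to `a`, `b` and another to `c`, `d` does not extend to `G`. By regularity, the
obstruction is a union `T` of components of `G - {a, b, c, d}`, which we take minimal. If `T` has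
two nonadjacent vertices with a common neighbour in `T`, then they can replace `a`, `b` or `c`, `d`,
and 3-connectedness makes the new obstruction strictly smaller. Otherwise `T` is a clique, and it
has exactly `k - 1` vertices.

In that case every Kempe swap near `T` that would connect `α` to `β` is blocked by colours appearing
outside `T`. These blocking colours force, say, `α a = α c` and `β a = β c`, and are so many that
`b` and `d` have at most one neighbour each in `T`. As `T` has at least three vertices, `a` and `c`
have a common neighbour in `T`, and the repetition on `a`, `c` makes `α` and `β` equivalent.
-/

section KempeSwaps

variable {W : Type*} {k : ℕ} {G : SimpleGraph V} {a b : Fin k} {U : Set V} {c c' : V → Fin k}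

/-- The colouring obtained from `c` by swapping the colours `a` and `b` on the set `U`. -/
noncomputable def kempeSwap (a b : Fin k) (U : Set V) (c : V → Fin k) : V → Fin k :=
  fun v ↦ if v ∈ U then Equiv.swap a b (c v) else c v

/-- `U` is closed for the colours `a` and `b`: no edge of the subgraph induced by the vertices
coloured `a` or `b` leaves `U`. Equivalently, the vertices of `U` coloured `a` or `b` form a union
of Kempe chains; the remaining vertices of `U` are irrelevant. -/
def IsKempeClosed (G : SimpleGraph V) (a b : Fin k) (U : Set V) (c : V → Fin k) : Prop :=
  ∀ ⦃p q : V⦄, G.Adj p q → p ∈ U → (c p = a ∨ c p = b) → (c q = a ∨ c q = b) → q ∈ U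

/-- The Kempe chain of `v₀`: the component of `v₀` in the subgraph induced by the vertices
coloured `a` or `b`, as a set of vertices of the whole graph. -/
def kempeChain (G : SimpleGraph V) (a b : Fin k) (c : V → Fin k)
    (v₀ : {x : V | c x = a ∨ c x = b}) : Set V :=
  Subtype.val '' {z | (G.induce {x : V | c x = a ∨ c x = b}).Reachable v₀ z}

theorem exists_notMem_of_card_lt {A : Finset (Fin k)} (hA : A.card < k) : ∃ e, e ∉ A := by
  by_contra! hall
  simp [Finset.eq_univ_of_forall hall] at hA

theorem kempeSwap_eq_or_eq_iff (v : V) :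
    (kempeSwap a b U c v = a ∨ kempeSwap a b U c v = b) ↔ (c v = a ∨ c v = b) := by
  grind [kempeSwap]

theorem kempeSwap_kempeSwap : kempeSwap a b U (kempeSwap a b U c) = c := by
  funext v
  by_cases hv : v ∈ U <;> simp [kempeSwap, hv]

theorem kempeSwap_kempeSwap_diff {C : Set V} (hCU : C ⊆ U) :
    kempeSwap a b (U \ C) (kempeSwap a b C c) = kempeSwap a b U c := by
  funext v
  by_cases hv : v ∈ C
  · simp [kempeSwap, hv, hCU hv]
  · simp [kempeSwap, hv]

theorem kempeSwap_eq_self (h : ∀ v ∈ U, ¬(c v = a ∨ c v = b)) : kempeSwap a b U c = c := by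
  grind [kempeSwap]

theorem isKempeClosed_kempeSwap_iff {U' : Set V} :
    IsKempeClosed G a b U (kempeSwap a b U' c) ↔ IsKempeClosed G a b U c := by
  simp only [IsKempeClosed, kempeSwap_eq_or_eq_iff]

theorem IsKempeClosed.diff {C : Set V} (hU : IsKempeClosed G a b U c)
    (hC : IsKempeClosed G a b C c) : IsKempeClosed G a b (U \ C) c := fun _ _ hpq hp hpc hqc ↦
  ⟨hU hpq hp.1 hpc hqc, fun hq ↦ hp.2 (hC hpq.symm hq hqc hpc)⟩

theorem IsKempeClosed.isProperColoring_kempeSwap (hU : IsKempeClosed G a b U c)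
    (hc : IsProperColoring G k c) : IsProperColoring G k (kempeSwap a b U c) := by
  intro p q hpq
  have := hc hpq
  have := @hU p q hpq
  have := @hU q p hpq.symm
  grind [kempeSwap]

theorem isKempeClosed_kempeChain (v₀ : {x : V | c x = a ∨ c x = b}) :
    IsKempeClosed G a b (kempeChain G a b c v₀) c := by
  rintro _ q hpq ⟨p, hp, rfl⟩ _ hqc
  have hpq' : (G.induce {x : V | c x = a ∨ c x = b}).Adj p ⟨q, hqc⟩ := hpq
  exact ⟨⟨q, hqc⟩, hp.trans hpq'.reachable, rfl⟩

theorem IsKempeClosed.kempeChain_subset (hU : IsKempeClosed G a b U c)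
    {v₀ : {x : V | c x = a ∨ c x = b}} (hv₀ : v₀.1 ∈ U) : kempeChain G a b c v₀ ⊆ U := by
  rintro _ ⟨z, hz, rfl⟩
  induction (reachable_iff_reflTransGen _ _).1 hz with
  | refl => exact hv₀
  | @tail y z hy hyz ih =>
    exact hU hyz (ih ((reachable_iff_reflTransGen _ _).2 hy)) y.2 z.2

theorem kempeStep_iff : KempeStep G k c c' ↔
    ∃ (a b : Fin k) (v₀ : {x : V | c x = a ∨ c x = b}),
      c' = kempeSwap a b (kempeChain G a b c v₀) c := by
  refine exists_congr fun a ↦ exists_congr fun b ↦ exists_congr fun v₀ ↦ ?_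
  rw [funext_iff]
  refine forall_congr' fun v ↦ ?_
  by_cases hv : c v = a ∨ c v = b
  · simp [kempeSwap, kempeChain, hv]
  · have hvC : v ∉ kempeChain G a b c v₀ := by
      rintro ⟨z, -, rfl⟩
      exact hv z.2
    simp [kempeSwap, hv, hvC]

theorem KempeStep.exists_isKempeClosed (h : KempeStep G k c c') :
    ∃ (a b : Fin k) (U : Set V), IsKempeClosed G a b U c ∧ c' = kempeSwap a b U c := by
  obtain ⟨a, b, v₀, rfl⟩ := kempeStep_iff.1 h
  exact ⟨a, b, _, isKempeClosed_kempeChain v₀, rfl⟩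

theorem KempeEquiv.isProperColoring (h : KempeEquiv G k c c') (hc : IsProperColoring G k c) :
    IsProperColoring G k c' := by
  induction h with
  | refl => exact hc
  | tail _ h ih =>
    obtain ⟨a, b, U, hU, rfl⟩ := h.exists_isKempeClosed
    exact hU.isProperColoring_kempeSwap ih

variable [Finite V]

theorem IsKempeClosed.kempeEquiv (hU : IsKempeClosed G a b U c) :
    KempeEquiv G k c (kempeSwap a b U c) := by
  induction U using WellFoundedLT.induction generalizing c with
  | ind U ih =>
  by_cases h : ∃ v₀ ∈ U, c v₀ = a ∨ c v₀ = b
  · obtain ⟨v₀, hv₀U, hv₀⟩ := h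
    set C := kempeChain G a b c ⟨v₀, hv₀⟩
    have hCU : C ⊆ U := hU.kempeChain_subset hv₀U
    have hv₀C : v₀ ∈ C := ⟨⟨v₀, hv₀⟩, .refl _, rfl⟩
    have hlt : U \ C < U := ⟨Set.sdiff_subset, fun h ↦ (h hv₀U).2 hv₀C⟩
    rw [← kempeSwap_kempeSwap_diff hCU]
    exact .head (kempeStep_iff.2 ⟨a, b, _, rfl⟩)
      (ih _ hlt (isKempeClosed_kempeSwap_iff.2 (hU.diff (isKempeClosed_kempeChain _))))
  · push Not at h
    rw [kempeSwap_eq_self fun v hv ↦ not_or.2 (h v hv)]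
    exact .refl

theorem KempeEquiv.symm (h : KempeEquiv G k c c') : KempeEquiv G k c' c := by
  induction h with
  | refl => exact .refl
  | tail _ h ih =>
    obtain ⟨a, b, U, hU, rfl⟩ := h.exists_isKempeClosed
    have hback := (isKempeClosed_kempeSwap_iff (U' := U)).2 hU |>.kempeEquiv
    rw [kempeSwap_kempeSwap] at hback
    exact hback.trans ih

theorem kempeEquiv_update {t : V} {e : Fin k} (hc : IsProperColoring G k c)
    (he : ∀ q, G.Adj t q → c q ≠ e) : KempeEquiv G k c (Function.update c t e) := by
  have hclosed : IsKempeClosed G (c t) e {t} c := by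
    rintro _ q htq rfl - (hq | hq)
    · exact absurd hq.symm (hc htq)
    · exact absurd hq (he q htq)
  convert hclosed.kempeEquiv using 1
  funext v
  by_cases hv : v = t
  · simp [hv, kempeSwap]
  · simp [hv, kempeSwap]

theorem KempeEquiv.comp_hom [Finite W] {H : SimpleGraph W} {d d' : W → Fin k} (π : G →g H)
    (h : KempeEquiv H k d d') : KempeEquiv G k (d ∘ π) (d' ∘ π) := by
  induction h with
  | refl => exact .refl
  | tail _ h ih =>
    obtain ⟨a, b, U, hU, rfl⟩ := h.exists_isKempeClosed
    have hclosed : IsKempeClosed G a b (π ⁻¹' U) (_ ∘ π) := fun p q hpq ↦ hU (π.map_adj hpq)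
    exact ih.trans hclosed.kempeEquiv

end KempeSwaps

section Degenerate

variable {k : ℕ} {H : SimpleGraph V} {t : V} {a b : Fin k} {U U' : Set V} {c d : V → Fin k}

theorem IsProperColoring.anti {G : SimpleGraph V} (hGH : G ≤ H) (hc : IsProperColoring H k c) :
    IsProperColoring G k c :=
  fun _ _ h ↦ hc (hGH h)

theorem Degenerate.anti {G : SimpleGraph V} [Finite V] {n : ℕ} (hGH : G ≤ H)
    (h : Degenerate H n) : Degenerate G n := fun S hS ↦
  let ⟨v, hv, hvn⟩ := h S hS
  ⟨v, hv, (Set.ncard_le_ncard (Set.inter_subset_inter_right S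
    fun _ ha ↦ hGH ha) (Set.toFinite _)).trans hvn⟩

theorem IsKempeClosed.of_deleteIncidenceSet (hU : IsKempeClosed (H.deleteIncidenceSet t) a b U c)
    (hdc : ∀ v ≠ t, d v = c v) (hUU' : ∀ v ≠ t, v ∈ U' ↔ v ∈ U)
    (ht : (d t = a ∨ d t = b) → ∀ q, H.Adj t q → (d q = a ∨ d q = b) → (q ∈ U' ↔ t ∈ U')) :
    IsKempeClosed H a b U' d := by
  intro p q hpq hp hpc hqc
  by_cases hpt : p = t
  · subst hpt
    exact (ht hpc q hpq hqc).2 hp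
  by_cases hqt : q = t
  · subst hqt
    exact (ht hqc p hpq.symm hpc).1 hp
  · rw [hdc p hpt] at hpc
    rw [hdc q hqt] at hqc
    exact (hUU' q hqt).2
      (hU (H.deleteIncidenceSet_adj.2 ⟨hpq, hpt, hqt⟩) ((hUU' p hpt).1 hp) hpc hqc)

variable [Finite V]

theorem exists_kempeEquiv_of_deleteIncidenceSet
    (hU : IsKempeClosed (H.deleteIncidenceSet t) a b U c)
    (hdc : ∀ v ≠ t, d v = c v) (hUU' : ∀ v ≠ t, v ∈ U' ↔ v ∈ U)
    (ht : (d t = a ∨ d t = b) → ∀ q, H.Adj t q → (d q = a ∨ d q = b) → (q ∈ U' ↔ t ∈ U')) :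
    ∃ d', KempeEquiv H k d d' ∧ ∀ v ≠ t, d' v = kempeSwap a b U c v :=
  ⟨_, (hU.of_deleteIncidenceSet hdc hUU' ht).kempeEquiv, fun v hv ↦ by
    simp only [kempeSwap, hUU' v hv, hdc v hv]⟩

theorem exists_color_forall_adj_ne (hk : (H.neighborSet t).ncard < k)
    (hd : ¬Set.InjOn d (H.neighborSet t)) : ∃ f ≠ d t, ∀ q, H.Adj t q → d q ≠ f := by
  have himage : (d '' H.neighborSet t).ncard < (H.neighborSet t).ncard :=
    (Set.ncard_image_le (Set.toFinite _)).lt_of_ne fun h ↦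
      hd ((Set.ncard_image_iff (Set.toFinite _)).1 h)
  have hinsert := Set.ncard_insert_le (d t) (d '' H.neighborSet t)
  obtain ⟨f, hf⟩ : ∃ f, f ∉ insert (d t) (d '' H.neighborSet t) := by
    by_contra! hall
    rw [Set.eq_univ_of_forall hall, Set.ncard_univ, Nat.card_eq_fintype_card,
      Fintype.card_fin] at hinsert
    omega
  exact ⟨f, fun h ↦ hf (.inl h), fun q hq h ↦ hf (.inr ⟨q, hq, h⟩)⟩

/- The only obstruction to performing the swap in `H` is a vertex `t` coloured `a` or `b` with
neighbours of the other colour both inside and outside `U`. These two neighbours share a colour, so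
some colour outside `{a, b}` is free at `t`, and `t` is first recoloured with it. -/
theorem exists_kempeEquiv_kempeSwap_of_deleteIncidenceSet (hk : (H.neighborSet t).ncard < k)
    (hd : IsProperColoring H k d) (hdc : ∀ v ≠ t, d v = c v)
    (hU : IsKempeClosed (H.deleteIncidenceSet t) a b U c) :
    ∃ d', KempeEquiv H k d d' ∧ ∀ v ≠ t, d' v = kempeSwap a b U c v := by
  by_cases hout : ∃ q, H.Adj t q ∧ (d t = a ∨ d t = b) ∧ (d q = a ∨ d q = b) ∧ q ∉ U
  · by_cases hin : ∃ p, H.Adj t p ∧ (d t = a ∨ d t = b) ∧ (d p = a ∨ d p = b) ∧ p ∈ U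
    · obtain ⟨q, htq, hdt, hdq, hqU⟩ := hout
      obtain ⟨p, htp, -, hdp, hpU⟩ := hin
      have hpq : d p = d q := by grind [hd htp, hd htq]
      obtain ⟨f, hft, hf⟩ := exists_color_forall_adj_ne hk
        fun h ↦ hqU (h htp htq hpq ▸ hpU)
      have hfab : ¬(f = a ∨ f = b) := by grind [hd htp, hf p htp]
      obtain ⟨d', hd', hd'c⟩ := exists_kempeEquiv_of_deleteIncidenceSet hU
        (d := Function.update d t f) (fun v hv ↦ by simp [hv, hdc v hv]) (fun _ _ ↦ Iff.rfl)
        fun h ↦ by simp [hfab] at h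
      exact ⟨d', (kempeEquiv_update hd hf).trans hd', hd'c⟩
    · exact exists_kempeEquiv_of_deleteIncidenceSet (U' := U \ {t}) hU hdc
        (fun v hv ↦ by simp [hv])
        fun hdt q htq hdq ↦ by simpa using fun hq ↦ absurd ⟨q, htq, hdt, hdq, hq⟩ hin
  · push Not at hout
    exact exists_kempeEquiv_of_deleteIncidenceSet (U' := insert t U) hU hdc
      (fun v hv ↦ by simp [hv])
      fun hdt q htq hdq ↦ by simpa using Or.inr (hout q htq hdt hdq)

theorem KempeClass.of_deleteIncidenceSet (hk : (H.neighborSet t).ncard < k)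
    (h : KempeClass (H.deleteIncidenceSet t) k) : KempeClass H k := by
  intro c c' hc hc'
  have hle := H.deleteIncidenceSet_le t
  have hlift {e : V → Fin k} (he : KempeEquiv (H.deleteIncidenceSet t) k c e) :
      ∃ d, KempeEquiv H k c d ∧ ∀ v ≠ t, d v = e v := by
    induction he with
    | refl => exact ⟨c, .refl, fun _ _ ↦ rfl⟩
    | tail _ hstep ih =>
      obtain ⟨a, b, U, hU, rfl⟩ := hstep.exists_isKempeClosed
      obtain ⟨d, hcd, hde⟩ := ih
      obtain ⟨d', hdd', hd'⟩ := exists_kempeEquiv_kempeSwap_of_deleteIncidenceSet hk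
        (hcd.isProperColoring hc) hde hU
      exact ⟨d', hcd.trans hdd', hd'⟩
  obtain ⟨d, hcd, hdc'⟩ := hlift (h c c' (hc.anti hle) (hc'.anti hle))
  have hupdate : Function.update d t (c' t) = c' := by
    funext v
    by_cases hv : v = t
    · simp [hv]
    · simp [hv, hdc' v hv]
  rw [← hupdate]
  exact hcd.trans (kempeEquiv_update (hcd.isProperColoring hc) fun q htq ↦
    hdc' q htq.ne' ▸ (hc' htq).symm)

theorem kempeClass_bot : KempeClass (⊥ : SimpleGraph V) k := by
  intro c c' _ _
  cases nonempty_fintype V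
  have hpiecewise (S : Finset V) : KempeEquiv ⊥ k c (S.piecewise c' c) := by
    induction S using Finset.induction_on with
    | empty => simpa using .refl
    | insert t S _ ih =>
      rw [Finset.piecewise_insert]
      exact ih.trans (kempeEquiv_update (fun _ _ h ↦ h.elim) fun _ h ↦ h.elim)
  simpa using hpiecewise Finset.univ

theorem Degenerate.kempeClass {n : ℕ} (hnk : n < k) (hH : Degenerate H n) : KempeClass H k := by
  induction H using WellFoundedLT.induction with
  | ind H ih =>
  by_cases hbot : H = ⊥
  · rw [hbot]
    exact kempeClass_bot
  obtain ⟨v, ⟨w, hvw⟩, hv⟩ := hH H.support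
    (Set.nonempty_iff_ne_empty.2 (mt H.support_eq_bot_iff.1 hbot))
  have hneighbor : H.neighborSet v ⊆ H.support := fun u hu ↦ ⟨v, H.adj_symm hu⟩
  rw [Set.inter_eq_right.2 hneighbor] at hv
  have hle := H.deleteIncidenceSet_le v
  have hlt : H.deleteIncidenceSet v < H :=
    lt_of_le_of_ne hle fun h ↦ (H.deleteIncidenceSet_adj.1 (h ▸ hvw)).2.1 rfl
  exact .of_deleteIncidenceSet (hv.trans_lt hnk) (ih _ hlt (hH.anti hle))

end Degenerate

section Identification

variable {k : ℕ} {G : SimpleGraph V} {x y : V}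

theorem ThreeConnected.exists_adj_notMem [Fintype V] (h : ThreeConnected G) {T : Set V}
    {p q t z : V} (ht : t ∈ T) (hp : p ∉ T) (hq : q ∉ T) (hz : z ∉ T) (hzp : z ≠ p) (hzq : z ≠ q) :
    ∃ s ∈ T, ∃ r ∉ T, G.Adj s r ∧ r ≠ p ∧ r ≠ q := by
  have hcard : ({p, q} : Set V).ncard ≤ 2 :=
    (Set.ncard_insert_le p {q}).trans (by rw [Set.ncard_singleton])
  have htpq : t ∉ ({p, q} : Set V) := by rintro (rfl | rfl) <;> contradiction
  have hzpq : z ∉ ({p, q} : Set V) := by rintro (rfl | rfl) <;> contradiction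
  obtain ⟨walk⟩ := (h.2 {p, q} hcard).preconnected ⟨t, htpq⟩ ⟨z, hzpq⟩
  obtain ⟨e, -, hes, her⟩ := walk.exists_boundary_dart (Subtype.val ⁻¹' T) ht hz
  exact ⟨e.fst, hes, e.snd, her, e.adj, fun h ↦ e.snd.2 (.inl h), fun h ↦ e.snd.2 (.inr h)⟩

theorem image_subset_and_injOn_of_ncard_le {W : Type*} {f : V → W} {N : Set V} {S : Set W}
    (hN : N.Finite) (h : N.ncard ≤ (S ∩ f '' N).ncard) : f '' N ⊆ S ∧ Set.InjOn f N := by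
  have hle : (f '' N).ncard ≤ N.ncard := Set.ncard_image_le hN
  have heq : S ∩ f '' N = f '' N :=
    Set.eq_of_subset_of_ncard_le Set.inter_subset_right (hle.trans h) (hN.image f)
  rw [heq] at h
  exact ⟨Set.inter_eq_right.1 heq, (Set.ncard_image_iff hN).1 (hle.antisymm h)⟩

/-- Two vertices at distance two: distinct, nonadjacent and with a common neighbour. These are the
pairs whose identification makes a 3-connected `k`-regular graph `(k - 1)`-degenerate. -/
structure Eligible (G : SimpleGraph V) (x y : V) : Prop where
  ne : x ≠ y
  not_adj : ¬G.Adj x y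
  exists_common_neighbor : ∃ w, G.Adj w x ∧ G.Adj w y

theorem Eligible.symm (h : Eligible G x y) : Eligible G y x where
  ne := h.ne.symm
  not_adj := mt G.adj_symm h.not_adj
  exists_common_neighbor := h.exists_common_neighbor.imp fun _ ↦ And.symm

/-- The graph obtained from `G` by identifying `y` with `x`. It lives on the same vertex set, so
that `y` remains as an isolated vertex. -/
noncomputable def identify (G : SimpleGraph V) (x y : V) : SimpleGraph V :=
  G.map (Function.update id y x)

theorem identify_adj {p q : V} : (identify G x y).Adj p q ↔
    p ≠ q ∧ ∃ p' q', G.Adj p' q' ∧ Function.update id y x p' = p ∧ Function.update id y x q' = q :=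
  Iff.rfl

theorem neighborSet_identify_self (hxy : x ≠ y) : (identify G x y).neighborSet y = ∅ := by
  refine Set.eq_empty_of_forall_notMem fun q hq ↦ ?_
  obtain ⟨-, p', -, -, hp', -⟩ := identify_adj.1 hq
  grind

theorem neighborSet_identify {v : V} (hvx : v ≠ x) (hvy : v ≠ y) :
    (identify G x y).neighborSet v = Function.update id y x '' G.neighborSet v := by
  ext q
  simp only [mem_neighborSet, identify_adj, Set.mem_image]
  constructor
  · rintro ⟨-, p', q', hpq', hp', hq'⟩
    have : p' = v := by grind
    exact ⟨q', this ▸ hpq', hq'⟩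
  · rintro ⟨q', hq', rfl⟩
    have := hq'.ne
    exact ⟨by grind, v, q', hq', by grind, rfl⟩

theorem comp_update_id_eq_self {c : V → Fin k} (hxy : c x = c y) :
    c ∘ Function.update id y x = c := by
  rw [Function.comp_update, Function.comp_id, hxy, Function.update_eq_self]

theorem IsProperColoring.identify {c : V → Fin k} (hc : IsProperColoring G k c)
    (hxy : c x = c y) : IsProperColoring (identify G x y) k c := by
  intro p q hpq
  obtain ⟨-, p', q', hpq', rfl, rfl⟩ := identify_adj.1 hpq
  have hc_update := congrFun (comp_update_id_eq_self hxy)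
  simp only [Function.comp_apply] at hc_update
  simpa only [hc_update] using hc hpq'

variable [Fintype V] [DecidableRel G.Adj]

theorem Eligible.degenerate_identify (hreg : G.IsRegularOfDegree k) (h3c : ThreeConnected G)
    (hxy : Eligible G x y) : Degenerate (identify G x y) (k - 1) := by
  intro S ⟨s, hs⟩
  by_contra! hS
  have hyS : y ∉ S := fun hy ↦ by
    have := hS y hy
    simp [neighborSet_identify_self hxy.ne] at this
  have hfull : ∀ v ∈ S \ {x}, Function.update id y x '' G.neighborSet v ⊆ S ∧
      Set.InjOn (Function.update id y x) (G.neighborSet v) := by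
    intro v ⟨hv, hvx⟩
    have hcard := hS v hv
    rw [neighborSet_identify hvx (ne_of_mem_of_not_mem hv hyS)] at hcard
    have hdeg : (G.neighborSet v).ncard = k := by
      rw [← hreg v, Set.ncard_eq_toFinset_card', Set.toFinset_card, card_neighborSet_eq_degree]
    exact image_subset_and_injOn_of_ncard_le (Set.toFinite _) (by omega)
  obtain ⟨t, ht⟩ : (S \ {x}).Nonempty := by
    obtain ⟨u, hu, hsu⟩ := Set.nonempty_of_ncard_ne_zero (Nat.ne_zero_of_lt (hS s hs))
    by_cases hsx : s = x
    · exact ⟨u, hu, fun hux ↦ hsu.1 (hsx.trans hux.symm)⟩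
    · exact ⟨s, hs, hsx⟩
  obtain ⟨w, hwx, hwy⟩ := hxy.exists_common_neighbor
  have hwT : w ∉ S \ {x} := fun hw ↦ hxy.ne ((hfull w hw).2 hwx hwy (by simp [hxy.ne]))
  obtain ⟨v, hv, r, hrT, hvr, hrx, hry⟩ :=
    h3c.exists_adj_notMem ht (by simp) (by simp [hyS]) hwT hwx.ne hwy.ne
  exact hrT ⟨(hfull v hv).1 ⟨r, hvr, by simp [hry]⟩, hrx⟩

theorem Eligible.kempeEquiv (hk : 0 < k) (hreg : G.IsRegularOfDegree k) (h3c : ThreeConnected G)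
    (hxy : Eligible G x y) {c c' : V → Fin k} (hc : IsProperColoring G k c)
    (hc' : IsProperColoring G k c') (hcxy : c x = c y) (hcxy' : c' x = c' y) :
    KempeEquiv G k c c' := by
  have hclass := (hxy.degenerate_identify hreg h3c).kempeClass (Nat.sub_lt hk one_pos) c c'
    (hc.identify hcxy) (hc'.identify hcxy')
  have hne {p q : V} (hpq : G.Adj p q) : Function.update id y x p ≠ Function.update id y x q := by
    have := hxy.not_adj
    have := hpq.ne
    have := hpq.symm
    grind
  have hcomp : KempeEquiv G k (c ∘ Function.update id y x) (c' ∘ Function.update id y x) :=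
    hclass.comp_hom (Hom.map _ G hne)
  rwa [comp_update_id_eq_self hcxy, comp_update_id_eq_self hcxy'] at hcomp

end Identification

section Obstructions

variable {k : ℕ} {G : SimpleGraph V} {f f₀ : V → Fin k} {S T T₁ T₂ : Finset V}

/-- `f` is a proper colouring of the subgraph induced by `S`; its values off `S` are ignored. -/
def IsProperOn (G : SimpleGraph V) (f : V → Fin k) (S : Finset V) : Prop :=
  ∀ ⦃p⦄, p ∈ S → ∀ ⦃q⦄, q ∈ S → G.Adj p q → f p ≠ f q

/-- The precolouring `f₀` of `S` extends to a proper colouring of the subgraph induced by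
`S ∪ T`. -/
def ExtendsTo (G : SimpleGraph V) (f₀ : V → Fin k) (S T : Finset V) : Prop :=
  ∃ f, (∀ s ∈ S, f s = f₀ s) ∧ IsProperOn G f (S ∪ T)

/-- `S` separates `T` from the rest of the graph: `T` is a union of components of `G - S`. -/
structure IsEnclosed (G : SimpleGraph V) (S T : Finset V) : Prop where
  disjoint : Disjoint T S
  mem_or_mem : ∀ t ∈ T, ∀ z, G.Adj t z → z ∈ T ∨ z ∈ S

/-- A minimal union of components of `G - S` to which the precolouring `f₀` of `S` does not
extend. -/
def IsMinimalObstruction (G : SimpleGraph V) (f₀ : V → Fin k) (S T : Finset V) : Prop :=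
  Minimal (fun T ↦ IsEnclosed G S T ∧ ¬ExtendsTo G f₀ S T) T

theorem IsProperOn.update {t : V} {e : Fin k} (hf : IsProperOn G f S)
    (he : ∀ q ∈ S, G.Adj t q → f q ≠ e) :
    IsProperOn G (Function.update f t e) (insert t S) := by
  intro p hp q hq hpq
  have := hpq.ne
  have := hpq.symm
  have := @hf p
  grind

theorem IsEnclosed.sdiff (h₁ : IsEnclosed G S T₁) (h₂ : IsEnclosed G S T₂) :
    IsEnclosed G S (T₁ \ T₂) where
  disjoint := h₁.disjoint.mono_left Finset.sdiff_subset
  mem_or_mem t ht z htz := by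
    have := h₁.mem_or_mem t
    have := h₂.mem_or_mem z
    have := Finset.disjoint_left.1 h₁.disjoint
    grind [htz.symm]

theorem IsEnclosed.extendsTo_union (h₁ : IsEnclosed G S T₁) (e₁ : ExtendsTo G f₀ S T₁)
    (e₂ : ExtendsTo G f₀ S T₂) : ExtendsTo G f₀ S (T₁ ∪ T₂) := by
  obtain ⟨f, hf₀, hf⟩ := e₁
  obtain ⟨g, hg₀, hg⟩ := e₂
  refine ⟨T₁.piecewise f g, fun s hs ↦ ?_, fun p hp q hq hpq ↦ ?_⟩
  · rw [Finset.piecewise_eq_of_notMem _ _ _ (Finset.disjoint_right.1 h₁.disjoint hs), hg₀ s hs]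
  · have hpT := h₁.mem_or_mem p
    have hqT := h₁.mem_or_mem q
    have hfpq := @hf p
    have hgpq := @hg p
    simp only [Finset.piecewise]
    grind [hpq.symm]

theorem IsMinimalObstruction.nonempty (hT : IsMinimalObstruction G f₀ S T)
    (hf₀ : IsProperOn G f₀ S) : T.Nonempty := by
  by_contra! hempty
  exact hT.prop.2 ⟨f₀, fun _ _ ↦ rfl, by simpa [hempty] using hf₀⟩

theorem IsMinimalObstruction.eq_of_isEnclosed (hT : IsMinimalObstruction G f₀ S T)
    (h₁ : IsEnclosed G S T₁) (hsub : T₁ ⊆ T) (hne : T₁.Nonempty) : T₁ = T := by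
  refine hsub.antisymm ?_
  by_cases e₁ : ExtendsTo G f₀ S T₁
  · have hsdiff : T ⊆ T \ T₁ := hT.le_of_le ⟨hT.prop.1.sdiff h₁, fun e₂ ↦ hT.prop.2 ?_⟩
      Finset.sdiff_subset
    · obtain ⟨t, ht⟩ := hne
      exact absurd ht (Finset.mem_sdiff.1 (hsdiff (hsub ht))).2
    · rw [← Finset.union_sdiff_of_subset hsub]
      exact h₁.extendsTo_union e₁ e₂
  · exact hT.le_of_le ⟨h₁, e₁⟩ hsub

theorem IsMinimalObstruction.isClique (hT : IsMinimalObstruction G f₀ S T)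
    (htrans : ∀ w ∈ T, ∀ e ∈ T, ∀ f ∈ T, G.Adj w e → G.Adj w f → e ≠ f → G.Adj e f) :
    G.IsClique (T : Set V) := by
  have hclosed (w : V) (hw : w ∈ T) : T.filter (fun z ↦ z = w ∨ G.Adj w z) = T := by
    refine hT.eq_of_isEnclosed ⟨?_, fun t ht z htz ↦ ?_⟩ (Finset.filter_subset _ T)
      ⟨w, by simp [hw]⟩
    · exact hT.prop.1.disjoint.mono_left (Finset.filter_subset _ T)
    · have := hT.prop.1.mem_or_mem t (Finset.mem_of_mem_filter t ht) z htz
      have := htrans t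
      grind [htz.symm, G.adj_comm]
  intro x hx y hy hxy
  have hmem := hclosed x hx ▸ hy
  simpa [hxy.symm] using (Finset.mem_filter.1 hmem).2

theorem exists_isProperColoring_or_isMinimalObstruction [Finite V] (G : SimpleGraph V)
    (f₀ : V → Fin k) (S : Finset V) : (∃ f, IsProperColoring G k f ∧ ∀ s ∈ S, f s = f₀ s) ∨
      ∃ T, IsMinimalObstruction G f₀ S T := by
  cases nonempty_fintype V
  by_cases h : ExtendsTo G f₀ S Sᶜ
  · obtain ⟨f, hf₀, hf⟩ := h
    exact .inl ⟨f, fun p q hpq ↦ hf (by simp) (by simp) hpq, hf₀⟩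
  · exact .inr (exists_minimal_of_wellFoundedLT _
      ⟨Sᶜ, ⟨disjoint_compl_left, fun _ _ z _ ↦ by simp [em']⟩, h⟩)

variable [Fintype V] [DecidableRel G.Adj]

theorem extendsTo_of_card_lt (hf₀ : IsProperOn G f₀ S) (hTS : Disjoint T S)
    (h : ∀ T' ⊆ T, T'.Nonempty → ∃ t ∈ T',
      (G.neighborFinset t ∩ T').card + ((G.neighborFinset t ∩ S).image f₀).card < k) :
    ExtendsTo G f₀ S T := by
  induction T using Finset.strongInductionOn with
  | _ T ih =>
  obtain rfl | hT := T.eq_empty_or_nonempty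
  · exact ⟨f₀, fun _ _ ↦ rfl, by simpa using hf₀⟩
  obtain ⟨t, ht, hcard⟩ := h T subset_rfl hT
  obtain ⟨f, hff₀, hf⟩ := ih _ (Finset.erase_ssubset ht)
    (hTS.mono_left (Finset.erase_subset t T))
    fun T' hT' ↦ h T' (hT'.trans (Finset.erase_subset t T))
  have hcolors : ((G.neighborFinset t ∩ T).image f ∪
      (G.neighborFinset t ∩ S).image f₀).card < k := by
    have hunion := Finset.card_union_le ((G.neighborFinset t ∩ T).image f)
      ((G.neighborFinset t ∩ S).image f₀)
    have himage : ((G.neighborFinset t ∩ T).image f).card ≤ _ := Finset.card_image_le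
    omega
  obtain ⟨e, he⟩ := exists_notMem_of_card_lt hcolors
  simp only [Finset.mem_union, Finset.mem_image, Finset.mem_inter, mem_neighborFinset, not_or,
    not_exists, not_and, and_imp] at he
  have htS : t ∉ S := Finset.disjoint_left.1 hTS ht
  have hinsert : insert t (S ∪ T.erase t) = S ∪ T := by
    rw [← Finset.union_insert, Finset.insert_erase ht]
  refine ⟨Function.update f t e, fun s hs ↦ ?_, hinsert ▸ hf.update fun q hq htq ↦ ?_⟩
  · rw [Function.update_of_ne (ne_of_mem_of_not_mem hs htS), hff₀ s hs]
  · obtain hqS | hqT := Finset.mem_union.1 hq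
    · exact hff₀ q hqS ▸ he.2 q htq hqS
    · exact he.1 q htq (Finset.mem_of_mem_erase hqT)

theorem IsEnclosed.of_le_card (hreg : G.IsRegularOfDegree k) (hTS : Disjoint T S)
    (h : ∀ t ∈ T, k ≤ (G.neighborFinset t ∩ T).card + ((G.neighborFinset t ∩ S).image f₀).card) :
    IsEnclosed G S T ∧ ∀ t ∈ T, Set.InjOn f₀ (G.neighborFinset t ∩ S : Finset V) := by
  have htight (t : V) (ht : t ∈ T) : (G.neighborFinset t ∩ T) ∪ (G.neighborFinset t ∩ S) =
      G.neighborFinset t ∧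
      ((G.neighborFinset t ∩ S).image f₀).card = (G.neighborFinset t ∩ S).card := by
    have hsub : (G.neighborFinset t ∩ T) ∪ (G.neighborFinset t ∩ S) ⊆ G.neighborFinset t :=
      Finset.union_subset Finset.inter_subset_left Finset.inter_subset_left
    have hdeg : (G.neighborFinset t).card = k := hreg t
    have hunion := Finset.card_union_of_disjoint
      (hTS.mono (Finset.inter_subset_right (s₁ := G.neighborFinset t))
        (Finset.inter_subset_right (s₁ := G.neighborFinset t)))
    have hle := Finset.card_le_card hsub
    have himage : ((G.neighborFinset t ∩ S).image f₀).card ≤ _ := Finset.card_image_le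
    have := h t ht
    exact ⟨Finset.eq_of_subset_of_card_le hsub (by omega), by omega⟩
  refine ⟨⟨hTS, fun t ht z htz ↦ ?_⟩, fun t ht ↦ Finset.card_image_iff.1 (htight t ht).2⟩
  have hz : z ∈ (G.neighborFinset t ∩ T) ∪ (G.neighborFinset t ∩ S) := by
    rw [(htight t ht).1]
    exact (mem_neighborFinset ..).2 htz
  exact (Finset.mem_union.1 hz).imp Finset.mem_of_mem_inter_right Finset.mem_of_mem_inter_right

theorem exists_isEnclosed_of_not_extendsTo (hreg : G.IsRegularOfDegree k)
    (hf₀ : IsProperOn G f₀ S) (hTS : Disjoint T S) (h : ¬ExtendsTo G f₀ S T) :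
    ∃ T' ⊆ T, T'.Nonempty ∧ IsEnclosed G S T' ∧
      ∀ t ∈ T', Set.InjOn f₀ (G.neighborFinset t ∩ S : Finset V) := by
  have hnot := mt (extendsTo_of_card_lt hf₀ hTS) h
  push Not at hnot
  obtain ⟨T', hT'T, hne, hcard⟩ := hnot
  exact ⟨T', hT'T, hne, IsEnclosed.of_le_card hreg (hTS.mono_left hT'T) hcard⟩

theorem IsMinimalObstruction.injOn (hreg : G.IsRegularOfDegree k) (hf₀ : IsProperOn G f₀ S)
    (hT : IsMinimalObstruction G f₀ S T) {t : V} (ht : t ∈ T) :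
    Set.InjOn f₀ (G.neighborFinset t ∩ S : Finset V) := by
  obtain ⟨T', hT'T, hne, hencl, hinj⟩ :=
    exists_isEnclosed_of_not_extendsTo hreg hf₀ hT.prop.1.disjoint hT.prop.2
  rw [← hT.eq_of_isEnclosed hencl hT'T hne] at ht
  exact hinj t ht

theorem ExtendsTo.of_isClique (hreg : G.IsRegularOfDegree k) (hTS : Disjoint T S)
    (hcl : G.IsClique (T : Set V)) {U : Finset V} (hUT : U ⊆ T) (hf₀ : IsProperOn G f₀ (S ∪ U))
    (h : ∀ t ∈ T, ∃ s ∈ S, G.Adj t s ∧ ∃ x ∈ U, f₀ x = f₀ s) : ExtendsTo G f₀ S T := by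
  by_contra hnot
  have hdisj : Disjoint (T \ U) (S ∪ U) := Finset.disjoint_union_right.2
    ⟨hTS.mono_left Finset.sdiff_subset, Finset.sdiff_disjoint⟩
  have hext : ¬ExtendsTo G f₀ (S ∪ U) (T \ U) := by
    rintro ⟨f, hff₀, hf⟩
    rw [Finset.union_assoc, Finset.union_sdiff_of_subset hUT] at hf
    exact hnot ⟨f, fun s hs ↦ hff₀ s (Finset.mem_union_left U hs), hf⟩
  obtain ⟨T', hT', ⟨t, ht⟩, -, hinj⟩ := exists_isEnclosed_of_not_extendsTo hreg hf₀ hdisj hext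
  obtain ⟨htT, htU⟩ := Finset.mem_sdiff.1 (hT' ht)
  obtain ⟨s, hs, hts, x, hx, hxs⟩ := h t htT
  have htx : G.Adj t x := hcl htT (hUT hx) (ne_of_mem_of_not_mem hx htU).symm
  refine Finset.disjoint_left.1 hTS (hUT hx) (?_ : x ∈ S)
  rwa [hinj t ht (by simp [htx, hx]) (by simp [hts, hs]) hxs]

theorem IsEnclosed.card_add_card_eq (hreg : G.IsRegularOfDegree k) (hT : IsEnclosed G S T)
    (hcl : G.IsClique (T : Set V)) {t : V} (ht : t ∈ T) :
    T.card + (G.neighborFinset t ∩ S).card = k + 1 := by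
  have heq : G.neighborFinset t = T.erase t ∪ (G.neighborFinset t ∩ S) := by
    ext z
    have := hT.mem_or_mem t ht z
    have := @hcl t ht z
    have := G.ne_of_adj (a := t) (b := z)
    simp only [mem_neighborFinset, Finset.mem_union, Finset.mem_erase, Finset.mem_inter]
    grind
  have hdisj : Disjoint (T.erase t) (G.neighborFinset t ∩ S) :=
    hT.disjoint.mono (Finset.erase_subset t T) Finset.inter_subset_right
  have hdeg : (G.neighborFinset t).card = k := hreg t
  rw [heq, Finset.card_union_of_disjoint hdisj, Finset.card_erase_of_mem ht] at hdeg
  have := Finset.card_pos.2 ⟨t, ht⟩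
  omega

theorem Eligible.exists_isProperColoring (hk : 0 < k) (hreg : G.IsRegularOfDegree k)
    (h3c : ThreeConnected G) {x y : V} (hxy : Eligible G x y) :
    ∃ c, IsProperColoring G k c ∧ c x = c y := by
  obtain ⟨c, hc, hc₀⟩ | ⟨T, hT⟩ :=
    exists_isProperColoring_or_isMinimalObstruction G (fun _ ↦ (⟨0, hk⟩ : Fin k)) {x, y}
  · exact ⟨c, hc, by rw [hc₀ x (by simp), hc₀ y (by simp)]⟩
  exfalso
  have hf₀ : IsProperOn G (fun _ ↦ (⟨0, hk⟩ : Fin k)) {x, y} := by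
    intro p hp q hq hpq
    have := hxy.not_adj
    have := hpq.symm
    have := hpq.ne
    grind
  obtain ⟨w, hwx, hwy⟩ := hxy.exists_common_neighbor
  have hw : w ∉ T := fun hw ↦
    hxy.ne (hT.injOn hreg hf₀ hw (by simp [hwx]) (by simp [hwy]) rfl)
  obtain ⟨t, ht⟩ := hT.nonempty hf₀
  have hST := Finset.disjoint_right.1 hT.prop.1.disjoint
  obtain ⟨s, hs, r, hr, hsr, hrx, hry⟩ := h3c.exists_adj_notMem (T := T) ht
    (hST (Finset.mem_insert_self x {y})) (hST (by simp)) hw hwx.ne hwy.ne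
  have := hT.prop.1.mem_or_mem s hs r hsr
  simp_all

theorem exists_adj_adj_apply_eq (hreg : G.IsRegularOfDegree k) (hf : IsProperColoring G k f)
    (w : V) :
    ∃ z, G.Adj w z ∧ ∃ z', G.Adj w z' ∧ z ≠ z' ∧ f z = f z' := by
  have hmaps : ∀ z ∈ G.neighborFinset w, f z ∈ Finset.univ.erase (f w) := fun z hz ↦
    Finset.mem_erase.2 ⟨(hf ((mem_neighborFinset ..).1 hz)).symm, Finset.mem_univ _⟩
  have hcard : (Finset.univ.erase (f w)).card < (G.neighborFinset w).card := by
    rw [Finset.card_erase_of_mem (Finset.mem_univ _), Finset.card_fin,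
      card_neighborFinset_eq_degree, hreg w]
    exact Nat.sub_lt (f w).pos one_pos
  simpa using Finset.exists_ne_map_eq_of_card_lt_of_maps_to hcard hmaps

end Obstructions

section Pockets

variable {k : ℕ} {G : SimpleGraph V} {a b c d e f u v w : V} {p q : Fin k} {T T' : Finset V}

/-- The precolouring giving colour `p` to `a` and `b`, and colour `q` to everything else. -/
noncomputable def pairColoring (a b : V) (p q : Fin k) : V → Fin k :=
  fun z ↦ if z = a ∨ z = b then p else q

/-- Two eligible pairs `a, b` and `c, d`, with common neighbours `u` and `v` respectively, such that
no colouring identifying the first pair is Kempe equivalent to one identifying the second. The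
theorem holds as soon as there is no such quadruple. -/
structure Quad (G : SimpleGraph V) (k : ℕ) (a b c d u v : V) : Prop where
  ab : Eligible G a b
  cd : Eligible G c d
  separated : ∀ ⦃f g : V → Fin k⦄, IsProperColoring G k f → IsProperColoring G k g →
    f a = f b → g c = g d → ¬KempeEquiv G k f g
  ua : G.Adj u a
  ub : G.Adj u b
  vc : G.Adj v c
  vd : G.Adj v d
  ac : a ≠ c
  ad : a ≠ d
  bc : b ≠ c
  bd : b ≠ d
  uc : u ≠ c
  ud : u ≠ d
  va : v ≠ a
  vb : v ≠ b

/-- A nonempty union `T` of components of `G - {a, b, c, d}` in which no vertex is adjacent to both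
`a` and `b`, or to both `c` and `d`. Minimal obstructions to extending a precolouring of the
quadruple are of this form. -/
structure IsPocket (G : SimpleGraph V) (a b c d : V) (T : Finset V) : Prop
    extends IsEnclosed G {a, b, c, d} T where
  nonempty : T.Nonempty
  not_adj_ab : ∀ t ∈ T, ¬(G.Adj t a ∧ G.Adj t b)
  not_adj_cd : ∀ t ∈ T, ¬(G.Adj t c ∧ G.Adj t d)

theorem IsPocket.symm (h : IsPocket G a b c d T) : IsPocket G c d a b T where
  disjoint := h.disjoint.mono_right (by grind)
  mem_or_mem t ht z htz := (h.mem_or_mem t ht z htz).imp_right (by grind)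
  nonempty := h.nonempty
  not_adj_ab := h.not_adj_cd
  not_adj_cd := h.not_adj_ab

theorem IsPocket.swap_left (h : IsPocket G a b c d T) : IsPocket G b a c d T where
  disjoint := h.disjoint.mono_right (by grind)
  mem_or_mem t ht z htz := (h.mem_or_mem t ht z htz).imp_right (by grind)
  nonempty := h.nonempty
  not_adj_ab t ht := mt And.symm (h.not_adj_ab t ht)
  not_adj_cd := h.not_adj_cd

theorem IsPocket.notMem (h : IsPocket G a b c d T) : a ∉ T ∧ b ∉ T ∧ c ∉ T ∧ d ∉ T := by
  have := Finset.disjoint_right.1 h.disjoint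
  simp_all

theorem IsPocket.mem_or_eq (h : IsPocket G a b c d T) {t z : V} (ht : t ∈ T) (htz : G.Adj t z) :
    z ∈ T ∨ z = a ∨ z = b ∨ z = c ∨ z = d := by
  simpa using h.mem_or_mem t ht z htz

theorem Quad.swap_left (h : Quad G k a b c d u v) : Quad G k b a c d u v where
  ab := h.ab.symm
  cd := h.cd
  separated _ _ hf hg hfe := h.separated hf hg hfe.symm
  ua := h.ub
  ub := h.ua
  vc := h.vc
  vd := h.vd
  ac := h.bc
  ad := h.bd
  bc := h.ac
  bd := h.ad
  uc := h.uc
  ud := h.ud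
  va := h.vb
  vb := h.va

theorem Quad.of_three_le_dist (huv : 3 ≤ G.dist u v) (hab : Eligible G a b)
    (hcd : Eligible G c d)
    (hsep : ∀ ⦃f g : V → Fin k⦄, IsProperColoring G k f → IsProperColoring G k g →
      f a = f b → g c = g d → ¬KempeEquiv G k f g)
    (hua : G.Adj u a) (hub : G.Adj u b) (hvc : G.Adj v c) (hvd : G.Adj v d) :
    Quad G k a b c d u v := by
  have hadj : ¬G.Adj u v := fun h ↦ by
    have := dist_eq_one_iff_adj.2 h
    omega
  have hcommon {z : V} (hz : G.Adj u z) : ¬G.Adj v z := fun hz' ↦ by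
    have : G.dist u v ≤ 2 := dist_le (.cons hz hz'.symm.toWalk)
    omega
  refine ⟨hab, hcd, hsep, hua, hub, hvc, hvd, ?_, ?_, ?_, ?_, ?_, ?_, ?_, ?_⟩ <;> rintro rfl
  exacts [hcommon hua hvc, hcommon hua hvd, hcommon hub hvc, hcommon hub hvd, hadj hvc.symm,
    hadj hvd.symm, hadj hua, hadj hub]

theorem isProperOn_pairColoring (hpq : p ≠ q) (hab : ¬G.Adj a b) (hcd : ¬G.Adj c d) :
    IsProperOn G (pairColoring a b p q) {a, b, c, d} := by
  intro y hy z hz hyz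
  have := hyz.symm
  have := hyz.ne
  simp only [pairColoring]
  grind

theorem Quad.symm [Finite V] (h : Quad G k a b c d u v) : Quad G k c d a b v u where
  ab := h.cd
  cd := h.ab
  separated _ _ hf hg hfe hge hfg := h.separated hg hf hge hfe hfg.symm
  ua := h.vc
  ub := h.vd
  vc := h.ua
  vd := h.ub
  ac := h.ac.symm
  ad := h.bc.symm
  bc := h.ad.symm
  bd := h.bd.symm
  uc := h.va
  ud := h.vb
  va := h.uc
  vb := h.ud

theorem Quad.exists_isMinimalObstruction [Finite V] (h : Quad G k a b c d u v)
    (p q : Fin k) :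
    ∃ T, IsMinimalObstruction G (pairColoring a b p q) {a, b, c, d} T := by
  obtain ⟨f, hf, hf₀⟩ | hT :=
    exists_isProperColoring_or_isMinimalObstruction G (pairColoring a b p q) {a, b, c, d}
  · refine absurd .refl (h.separated hf hf ?_ ?_) <;>
      simp [hf₀, pairColoring, h.ac.symm, h.ad.symm, h.bc.symm, h.bd.symm]
  · exact hT

variable [Fintype V]

theorem IsPocket.exists_adj_cd (hT : IsPocket G a b c d T) (h3c : ThreeConnected G)
    (hua : G.Adj u a) (hub : G.Adj u b) : ∃ t ∈ T, G.Adj t c ∨ G.Adj t d := by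
  obtain ⟨t, ht⟩ := hT.nonempty
  obtain ⟨s, hs, r, hr, hsr, hra, hrb⟩ := h3c.exists_adj_notMem (T := T) ht hT.notMem.1
    hT.notMem.2.1 (fun hu ↦ hT.not_adj_ab u hu ⟨hua, hub⟩) hua.ne hub.ne
  have := hT.mem_or_eq hs hsr
  grind

theorem Quad.notMem_of_isPocket (hQ : Quad G k a b c d u v) (h3c : ThreeConnected G)
    (hT : IsPocket G a b c d T) (hT' : IsPocket G a b e f T') (he : e ∈ T) (hf : f ∈ T) :
    c ∉ T' ∧ d ∉ T' := by
  have hvT : v ∉ T := fun hv ↦ hT.not_adj_cd v hv ⟨hQ.vc, hQ.vd⟩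
  have hleave {t z : V} (ht : t ∈ T') (htz : G.Adj t z) (hz : z ∉ T) : z ∈ T' ∨ z = a ∨ z = b := by
    have := hT'.mem_or_eq ht htz
    grind
  by_contra! hcd
  have hvT' : v ∈ T' := by
    have := hQ.va
    have := hQ.vb
    by_cases hc : c ∈ T'
    · grind [hleave hc hQ.vc.symm hvT]
    · grind [hleave (hcd hc) hQ.vd.symm hvT]
  have hcT' : c ∈ T' := by grind [hleave hvT' hQ.vc hT.notMem.2.2.1, hQ.ac, hQ.bc]
  have hdT' : d ∈ T' := by grind [hleave hvT' hQ.vd hT.notMem.2.2.2, hQ.ad, hQ.bd]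
  obtain ⟨s, hs, r, hr, hsr, hra, hrb⟩ :=
    h3c.exists_adj_notMem (T := {z | z ∉ T ∧ z ≠ a ∧ z ≠ b ∧ z ∉ T'}) (p := a) (q := b) (t := u)
      (z := v) ⟨fun hu ↦ hT.not_adj_ab u hu ⟨hQ.ua, hQ.ub⟩, hQ.ua.ne, hQ.ub.ne,
        fun hu ↦ hT'.not_adj_ab u hu ⟨hQ.ua, hQ.ub⟩⟩ (by simp) (by simp) (by simp [hvT'])
      hQ.va hQ.vb
  have := @IsPocket.mem_or_eq _ _ _ _ _ _ _ hT r s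
  have := @IsPocket.mem_or_eq _ _ _ _ _ _ _ hT' r s
  simp only [Set.mem_ofPred_eq] at hs hr
  grind [hsr.symm]

theorem Quad.ssubset_of_isPocket (hQ : Quad G k a b c d u v) (h3c : ThreeConnected G)
    (hT : IsPocket G a b c d T) (hT' : IsPocket G a b e f T') (he : e ∈ T) (hf : f ∈ T)
    (hw : w ∈ T) (hwe : G.Adj w e) (hwf : G.Adj w f) : T' ⊂ T := by
  have hcd := hQ.notMem_of_isPocket h3c hT hT' he hf
  refine Finset.ssubset_iff_of_subset (fun r hr ↦ ?_) |>.2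
    ⟨w, hw, fun hwT' ↦ hT'.not_adj_cd w hwT' ⟨hwe, hwf⟩⟩
  by_contra hrT
  obtain ⟨s, hs, z, hz, hsz, hza, hzb⟩ := h3c.exists_adj_notMem (T := {z | z ∈ T' ∧ z ∉ T})
    (p := a) (q := b) (z := u) ⟨hr, hrT⟩ (fun ha ↦ hT'.notMem.1 ha.1)
    (fun hb ↦ hT'.notMem.2.1 hb.1) (fun hu ↦ hT'.not_adj_ab u hu.1 ⟨hQ.ua, hQ.ub⟩)
    hQ.ua.ne hQ.ub.ne
  have hzT' := hT'.mem_or_eq hs.1 hsz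
  have := @IsPocket.mem_or_eq _ _ _ _ _ _ _ hT z s
  have := hT'.notMem
  simp only [Set.mem_ofPred_eq] at hs hz
  grind [hsz.symm]

variable [DecidableRel G.Adj]

theorem IsMinimalObstruction.isPocket (hreg : G.IsRegularOfDegree k) (hpq : p ≠ q)
    (hab : Eligible G a b) (hcd : Eligible G c d) (hac : a ≠ c) (had : a ≠ d) (hbc : b ≠ c)
    (hbd : b ≠ d) (hT : IsMinimalObstruction G (pairColoring a b p q) {a, b, c, d} T) :
    IsPocket G a b c d T := by
  have hf₀ := isProperOn_pairColoring (G := G) hpq hab.not_adj hcd.not_adj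
  refine ⟨hT.prop.1, hT.nonempty hf₀, fun t ht _ ↦ hab.ne ?_,
    fun t ht _ ↦ hcd.ne ?_⟩ <;>
  refine hT.injOn hreg hf₀ ht ?_ ?_ ?_ <;>
  simp [*, pairColoring, hac.symm, had.symm, hbc.symm, hbd.symm]

theorem Quad.isPocket (hQ : Quad G k a b c d u v) (hreg : G.IsRegularOfDegree k) (hpq : p ≠ q)
    (hT : IsMinimalObstruction G (pairColoring a b p q) {a, b, c, d} T) :
    IsPocket G a b c d T :=
  hT.isPocket hreg hpq hQ.ab hQ.cd hQ.ac hQ.ad hQ.bc hQ.bd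

theorem Quad.quad_or_quad (hQ : Quad G k a b c d u v) (hk : 0 < k)
    (hreg : G.IsRegularOfDegree k) (h3c : ThreeConnected G) (hT : IsPocket G a b c d T)
    (he : e ∈ T) (hf : f ∈ T) (hw : w ∈ T) (hwe : G.Adj w e) (hwf : G.Adj w f) (hef : e ≠ f)
    (hadj : ¬G.Adj e f) : Quad G k a b e f u w ∨ Quad G k e f c d w v := by
  have hel : Eligible G e f := ⟨hef, hadj, w, hwe, hwf⟩
  have ⟨haT, hbT, hcT, hdT⟩ := hT.notMem
  have huT : u ∉ T := fun hu ↦ hT.not_adj_ab u hu ⟨hQ.ua, hQ.ub⟩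
  have hvT : v ∉ T := fun hv ↦ hT.not_adj_cd v hv ⟨hQ.vc, hQ.vd⟩
  by_cases hsep : ∀ ⦃g h : V → Fin k⦄, IsProperColoring G k g → IsProperColoring G k h →
    g a = g b → h e = h f → ¬KempeEquiv G k g h
  · exact .inl ⟨hQ.ab, hel, hsep, hQ.ua, hQ.ub, hwe, hwf, by grind, by grind, by grind, by grind,
      by grind, by grind, by grind, by grind⟩
  push Not at hsep
  obtain ⟨g, h, hg, hh, hgab, hhef, hgh⟩ := hsep
  refine .inr ⟨hel, hQ.cd, fun h' g' hh' hg' hh'ef hg'cd hequiv ↦ ?_, hwe, hwf, hQ.vc, hQ.vd,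
    by grind, by grind, by grind, by grind, by grind, by grind, by grind, by grind⟩
  exact hQ.separated hg hg' hgab hg'cd
    ((hgh.trans (hel.kempeEquiv hk hreg h3c hh hh' hhef hh'ef)).trans hequiv)

theorem Quad.exists_isClique (hQ : Quad G k a b c d u v) (hk : 0 < k)
    (hreg : G.IsRegularOfDegree k) (h3c : ThreeConnected G) (hpq : p ≠ q) :
    ∃ a b c d u v T, Quad G k a b c d u v ∧
      IsMinimalObstruction G (pairColoring a b p q) {a, b, c, d} T ∧ G.IsClique (T : Set V) := by
  obtain ⟨T, hT⟩ := hQ.exists_isMinimalObstruction p q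
  induction T using Finset.strongInductionOn generalizing a b c d u v with
  | _ T ih =>
  have hpocket := hQ.isPocket hreg hpq hT
  by_cases! htrans : ∀ w ∈ T, ∀ e ∈ T, ∀ f ∈ T, G.Adj w e → G.Adj w f → e ≠ f → G.Adj e f
  · exact ⟨a, b, c, d, u, v, T, hQ, hT, hT.isClique htrans⟩
  obtain ⟨w, hw, e, he, f, hf, hwe, hwf, hef, hadj⟩ := htrans
  obtain hQ' | hQ' := hQ.quad_or_quad hk hreg h3c hpocket he hf hw hwe hwf hef hadj
  all_goals
    obtain ⟨T', hT'⟩ := hQ'.exists_isMinimalObstruction p q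
    have hpocket' := hQ'.isPocket hreg hpq hT'
  · exact ih T' (hQ.ssubset_of_isPocket h3c hpocket hpocket' he hf hw hwe hwf) hQ' hT'
  · have hlt := hQ.symm.ssubset_of_isPocket h3c hpocket.symm hpocket'.symm he hf hw hwe hwf
    exact ih T' hlt hQ' hT'

end Pockets

section CliqueConfigurations

variable {k : ℕ} {G : SimpleGraph V} {a b c d u v x y : V} {K : Finset V} {α β f g : V → Fin k}
  {m m₀ m₁ m₂ : Fin k}

/-- A quadruple with a pocket `K` that is a clique on `k - 1` vertices, each of which is adjacent to
exactly one of `a`, `b` and to exactly one of `c`, `d`. Minimal pockets give rise to such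
configurations. -/
structure CliqueConfig (G : SimpleGraph V) (k : ℕ) (a b c d u v : V) (K : Finset V) : Prop
    extends Quad G k a b c d u v, IsPocket G a b c d K where
  card_add_one : K.card + 1 = k
  isClique : G.IsClique (K : Set V)
  adj_ab : ∀ x ∈ K, G.Adj x a ∨ G.Adj x b
  adj_cd : ∀ x ∈ K, G.Adj x c ∨ G.Adj x d

/-- The colours that `α` gives to the neighbours of `e` outside `K`. If there are many of them, then
`e` has few neighbours in `K`. -/
noncomputable def outsideColors [Fintype V] (G : SimpleGraph V) [DecidableRel G.Adj]
    (K : Finset V) (α : V → Fin k) (e : V) : Finset (Fin k) :=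
  (G.neighborFinset e \ K).image α

theorem mem_outsideColors [Fintype V] [DecidableRel G.Adj] :
    m ∈ outsideColors G K α x ↔ ∃ z, G.Adj x z ∧ z ∉ K ∧ α z = m := by
  simp [outsideColors, and_assoc]

theorem outsideColors_kempeSwap [Fintype V] [DecidableRel G.Adj] :
    outsideColors G K (kempeSwap m₁ m₂ K α) x = outsideColors G K α x :=
  Finset.image_congr fun _ hz ↦ if_neg (Finset.mem_sdiff.1 hz).2

theorem card_neighborFinset_inter_le_one [Fintype V] [DecidableRel G.Adj]
    (hreg : G.IsRegularOfDegree k) (h : ∀ m ≠ m₀, m ∈ outsideColors G K α x) :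
    (G.neighborFinset x ∩ K).card ≤ 1 := by
  have hsub : Finset.univ.erase m₀ ⊆ outsideColors G K α x := by
    simpa [Finset.subset_iff] using h
  have hcard := (Finset.card_le_card hsub).trans Finset.card_image_le
  rw [Finset.card_erase_of_mem (Finset.mem_univ _), Finset.card_fin] at hcard
  have hdeg : (G.neighborFinset x).card = k := hreg x
  have := Finset.card_sdiff_add_card_inter (G.neighborFinset x) K
  omega

namespace CliqueConfig

theorem swap_left (h : CliqueConfig G k a b c d u v K) : CliqueConfig G k b a c d u v K where
  toQuad := h.toQuad.swap_left
  toIsPocket := h.toIsPocket.swap_left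
  card_add_one := h.card_add_one
  isClique := h.isClique
  adj_ab x hx := (h.adj_ab x hx).symm
  adj_cd := h.adj_cd

theorem symm [Finite V] (h : CliqueConfig G k a b c d u v K) :
    CliqueConfig G k c d a b v u K where
  toQuad := h.toQuad.symm
  toIsPocket := h.toIsPocket.symm
  card_add_one := h.card_add_one
  isClique := h.isClique
  adj_ab := h.adj_cd
  adj_cd := h.adj_ab

theorem swap_right [Finite V] (h : CliqueConfig G k a b c d u v K) :
    CliqueConfig G k a b d c u v K :=
  h.symm.swap_left.symm

theorem pos (h : CliqueConfig G k a b c d u v K) : 0 < k :=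
  h.card_add_one ▸ K.card.succ_pos

theorem v_notMem (h : CliqueConfig G k a b c d u v K) : v ∉ K :=
  fun hv ↦ h.not_adj_cd v hv ⟨h.vc, h.vd⟩

theorem exists_mem_ne_ne (h : CliqueConfig G k a b c d u v K) (hk : 4 ≤ k) (x y : V) :
    ∃ z ∈ K, z ≠ x ∧ z ≠ y := by
  have hlt : ({x, y} : Finset V).card < K.card := by
    have := h.card_add_one
    have := Finset.card_le_two (a := x) (b := y)
    omega
  obtain ⟨z, hz, hzxy⟩ := Finset.exists_mem_notMem_of_card_lt_card hlt
  exact ⟨z, hz, by simpa using hzxy⟩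

theorem apply_ne (h : CliqueConfig G k a b c d u v K) (hα : IsProperColoring G k α)
    (hab : α a = α b) (hy : y ∈ K) : α y ≠ α a := by
  obtain hya | hyb := h.adj_ab y hy
  · exact hα hya
  · exact hab ▸ hα hyb

theorem apply_d_ne (h : CliqueConfig G k a b c d u v K) (hα : IsProperColoring G k α)
    (hab : α a = α b) (hac : α a = α c) : α d ≠ α a :=
  fun hda ↦ h.separated hα hα hab (hac.symm.trans hda.symm) .refl

theorem eq_of_apply_eq (h : CliqueConfig G k a b c d u v K) (hα : IsProperColoring G k α)
    (hx : x ∈ K) (hy : y ∈ K) (hxy : α x = α y) : x = y := by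
  by_contra hne
  exact hα (h.isClique hx hy hne) hxy

theorem exists_apply_eq (h : CliqueConfig G k a b c d u v K) (hα : IsProperColoring G k α)
    (hab : α a = α b) (hm : m ≠ α a) : ∃ y ∈ K, α y = m := by
  have hsub : K.image α ⊆ Finset.univ.erase (α a) := by
    simpa [Finset.subset_iff] using fun y hy ↦ h.apply_ne hα hab hy
  have hcard : (K.image α).card = K.card :=
    Finset.card_image_of_injOn fun x hx y hy ↦ h.eq_of_apply_eq hα hx hy
  have heq := Finset.eq_of_subset_of_card_le hsub (by
    simp [hcard, Finset.card_erase_of_mem, ← h.card_add_one])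
  exact Finset.mem_image.1 (heq ▸ Finset.mem_erase.2 ⟨hm, Finset.mem_univ m⟩)

theorem isKempeClosed_coe (h : CliqueConfig G k a b c d u v K) (hab : α a = α b)
    (hac : α a = α c) (hm₁ : m₁ ≠ α a) (hm₂ : m₂ ≠ α a)
    (hd : ∀ t ∈ K, G.Adj t d → α d ≠ m₁ ∧ α d ≠ m₂) : IsKempeClosed G m₁ m₂ K α := by
  intro t s hts ht _ hs
  have := h.mem_or_eq ht hts
  have := hd t ht
  grind

variable [Fintype V] [DecidableRel G.Adj]

theorem exists_adj_d (h : CliqueConfig G k a b c d u v K) (hreg : G.IsRegularOfDegree k)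
    (h3c : ThreeConnected G) : ∃ w ∈ K, G.Adj w d := by
  by_contra! hcon
  have hKc (y) (hy : y ∈ K) : G.Adj y c := (h.adj_cd y hy).resolve_right (hcon y hy)
  obtain ⟨α, hα, hab⟩ := h.ab.exists_isProperColoring h.pos hreg h3c
  obtain ⟨β, hβ, hcd⟩ := h.cd.exists_isProperColoring h.pos hreg h3c
  have hac : α a = α c := by
    by_contra hne
    obtain ⟨y, hy, hyc⟩ := h.exists_apply_eq hα hab (Ne.symm hne)
    exact hα (hKc y hy) hyc
  have hN : insert v K = G.neighborFinset c := by
    refine Finset.eq_of_subset_of_card_le (fun z hz ↦ ?_) ?_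
    · rw [mem_neighborFinset]
      obtain rfl | hz := Finset.mem_insert.1 hz
      exacts [h.vc.symm, (hKc z hz).symm]
    · rw [Finset.card_insert_of_notMem h.v_notMem, h.card_add_one]
      exact (hreg c).le
  have hvK (x) (hx : x ∈ K) : β v ≠ β x := by
    intro hvx
    have hel : Eligible G v x := ⟨(ne_of_mem_of_not_mem hx h.v_notMem).symm,
      fun hadj ↦ hβ hadj hvx, c, h.vc.symm, (hKc x hx).symm⟩
    have hclosed : IsKempeClosed G (α x) (α v) K α := h.isKempeClosed_coe hab hac
      (h.apply_ne hα hab hx) (hac ▸ hα h.vc) fun t ht htd ↦ absurd htd (hcon t ht)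
    refine h.separated hα hβ hab hcd (hclosed.kempeEquiv.trans (hel.kempeEquiv h.pos hreg h3c
      (hclosed.isProperColoring_kempeSwap hα) hβ ?_ hvx))
    simp [kempeSwap, h.v_notMem, hx]
  obtain ⟨z, hz, z', hz', hne, heq⟩ := exists_adj_adj_apply_eq hreg hβ c
  rw [← mem_neighborFinset, ← hN, Finset.mem_insert] at hz hz'
  have := h.eq_of_apply_eq hβ (x := z) (y := z')
  grind

theorem exists_isProperColoring_cross (h : CliqueConfig G k a b c d u v K) (hk : 4 ≤ k)
    (hreg : G.IsRegularOfDegree k) (h3c : ThreeConnected G) (hel₁ : Eligible G a y)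
    (hel₂ : Eligible G b x) (hx : x ∈ K) (hy : y ∈ K) (hxy : x ≠ y) :
    ∃ e, IsProperColoring G k e ∧ e a = e y ∧ e b = e x := by
  have hpq : (⟨0, h.pos⟩ : Fin k) ≠ ⟨1, by omega⟩ := by simp
  have ⟨haK, hbK, hcK, hdK⟩ := h.notMem
  have hax : a ≠ x := (ne_of_mem_of_not_mem hx haK).symm
  have hyb : y ≠ b := ne_of_mem_of_not_mem hy hbK
  obtain ⟨e, he, he₀⟩ | ⟨T, hT⟩ := exists_isProperColoring_or_isMinimalObstruction G
    (pairColoring a y ⟨0, h.pos⟩ ⟨1, by omega⟩) {a, y, b, x}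
  · exact ⟨e, he, by simp [he₀, pairColoring], by
      simp [he₀, pairColoring, h.ab.ne.symm, hyb.symm, hax.symm, hxy]⟩
  exfalso
  replace hT := hT.isPocket hreg hpq hel₁ hel₂ h.ab.ne hax hyb hxy.symm
  have hTK (z) (hz : z ∈ K) : z ∉ T := by
    intro hzT
    have := h.adj_ab z hz
    have := h.isClique hz hx
    have := h.isClique hz hy
    have := hT.not_adj_ab z hzT
    have := hT.not_adj_cd z hzT
    have := hT.notMem
    grind
  have hstep {r s : V} (hr : r ∈ T) (hrs : G.Adj r s) := hT.mem_or_eq hr hrs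
  have hcdT : c ∉ T ∧ d ∉ T := by
    obtain ⟨z, hz, hzx, hzy⟩ := h.exists_mem_ne_ne hk x y
    have := h.adj_cd z hz
    grind [h.vc, h.vd, h.va, h.vb, h.ac, h.ad, h.bc, h.bd, h.v_notMem, G.adj_comm]
  obtain ⟨t, ht⟩ := hT.nonempty
  obtain ⟨s, hs, r, hr, hsr, hra, hrb⟩ := h3c.exists_adj_notMem (T := T) ht hT.notMem.1
    hT.notMem.2.2.1 hcdT.1 h.ac.symm h.bc.symm
  have hrK : r ∈ K := by grind
  have := h.mem_or_eq hrK hsr.symm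
  grind [hT.notMem]

theorem kempeEquiv_of_cross (h : CliqueConfig G k a b c d u v K) (hk : 4 ≤ k)
    (hreg : G.IsRegularOfDegree k) (h3c : ThreeConnected G) (hx : x ∈ K) (hy : y ∈ K)
    (hxa : G.Adj x a) (hyb : G.Adj y b) (hf : IsProperColoring G k f) (hfay : f a = f y)
    (hg : IsProperColoring G k g) (hgbx : g b = g x) : KempeEquiv G k f g := by
  have hya : ¬G.Adj y a := fun hya ↦ h.not_adj_ab y hy ⟨hya, hyb⟩
  have hxb : ¬G.Adj x b := fun hxb ↦ h.not_adj_ab x hx ⟨hxa, hxb⟩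
  have hxy : x ≠ y := by rintro rfl; exact hya hxa
  have hadj : G.Adj x y := h.isClique hx hy hxy
  have hel₁ : Eligible G a y :=
    ⟨(ne_of_mem_of_not_mem hy h.notMem.1).symm, mt G.adj_symm hya, x, hxa, hadj⟩
  have hel₂ : Eligible G b x :=
    ⟨(ne_of_mem_of_not_mem hx h.notMem.2.1).symm, mt G.adj_symm hxb, y, hyb, hadj.symm⟩
  obtain ⟨e, he, heay, hebx⟩ := h.exists_isProperColoring_cross hk hreg h3c hel₁ hel₂ hx hy hxy
  exact (hel₁.kempeEquiv h.pos hreg h3c hf he hfay heay).trans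
    (hel₂.kempeEquiv h.pos hreg h3c he hg hebx hgbx)

theorem kempeEquiv_of_apply_c_eq (h : CliqueConfig G k a b c d u v K) (hk : 4 ≤ k)
    (hreg : G.IsRegularOfDegree k) (h3c : ThreeConnected G) (hy : y ∈ K) (hyd : G.Adj y d)
    (hα : IsProperColoring G k α) (hab : α a = α b) (hg : IsProperColoring G k g)
    (hgcy : g c = g y) : KempeEquiv G k α g := by
  by_cases hda : α d = α a
  · have hca : α c ≠ α a := fun hca ↦ h.separated hα hα hab (hca.trans hda.symm) .refl
    obtain ⟨y', hy', hy'c⟩ := h.exists_apply_eq hα hab hca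
    have hy'd : G.Adj y' d := (h.adj_cd y' hy').resolve_left fun hadj ↦ hα hadj hy'c
    obtain ⟨x, hx, hxc⟩ := h.swap_right.exists_adj_d hreg h3c
    have hxd : ¬G.Adj x d := fun hxd ↦ h.not_adj_cd x hx ⟨hxc, hxd⟩
    have hne : y' ≠ x := by rintro rfl; exact hxd hy'd
    have hel : Eligible G d x := ⟨(ne_of_mem_of_not_mem hx h.notMem.2.2.2).symm,
      mt G.adj_symm hxd, y', hy'd, h.isClique hy' hx hne⟩
    obtain ⟨f, hf, hfd⟩ := hel.exists_isProperColoring h.pos hreg h3c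
    exact (h.symm.kempeEquiv_of_cross hk hreg h3c hx hy' hxc hy'd hα hy'c.symm hf hfd).trans
      (h.symm.kempeEquiv_of_cross hk hreg h3c hx hy hxc hyd hg hgcy hf hfd).symm
  · obtain ⟨x, hx, hxd⟩ := h.exists_apply_eq hα hab hda
    have hxc : G.Adj x c := (h.adj_cd x hx).resolve_right fun hadj ↦ hα hadj hxd
    exact (h.symm.kempeEquiv_of_cross hk hreg h3c hx hy hxc hyd hg hgcy hα hxd.symm).symm

theorem apply_b_ne_of_kempeEquiv (h : CliqueConfig G k a b c d u v K) (hk : 4 ≤ k)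
    (hreg : G.IsRegularOfDegree k) (h3c : ThreeConnected G) (hy : y ∈ K) (hya : G.Adj y a)
    (hα : IsProperColoring G k α) (hab : α a = α b) (hαg : KempeEquiv G k α g) : g b ≠ g y := by
  intro hgby
  obtain ⟨β, hβ, hcd⟩ := h.cd.exists_isProperColoring h.pos hreg h3c
  have hβg := h.swap_left.symm.kempeEquiv_of_apply_c_eq hk hreg h3c hy hya hβ hcd
    (hαg.isProperColoring hα) hgby
  exact h.separated hα hβ hab hcd (hαg.trans hβg.symm)

theorem apply_mem_outsideColors_a (h : CliqueConfig G k a b c d u v K) (hk : 4 ≤ k)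
    (hreg : G.IsRegularOfDegree k) (h3c : ThreeConnected G) (hα : IsProperColoring G k α)
    (hab : α a = α b) (hy : y ∈ K) (hya : G.Adj y a) (hc : G.Adj y c → α c ≠ α a)
    (hd : G.Adj y d → α d ≠ α a) : α y ∈ outsideColors G K α a := by
  by_contra hout
  have hby : b ≠ y := (ne_of_mem_of_not_mem hy h.notMem.2.1).symm
  have hyb : ¬G.Adj y b := fun hyb ↦ h.not_adj_ab y hy ⟨hya, hyb⟩
  have hclosed : IsKempeClosed G (α a) (α y) {y, a} α := by
    rintro t s hts (rfl | rfl) - hs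
    · have := hα hts
      have := h.mem_or_eq hy hts
      have := h.apply_ne hα hab (y := s)
      grind
    · have := hα hts
      have := h.eq_of_apply_eq hα (x := s) (hy := hy)
      grind [mem_outsideColors]
  refine h.apply_b_ne_of_kempeEquiv hk hreg h3c hy hya hα hab hclosed.kempeEquiv ?_
  simp [kempeSwap, hby, h.ab.ne.symm, hab]

theorem apply_mem_outsideColors_b (h : CliqueConfig G k a b c d u v K) (hk : 4 ≤ k)
    (hreg : G.IsRegularOfDegree k) (h3c : ThreeConnected G) (hα : IsProperColoring G k α)
    (hab : α a = α b) (hy : y ∈ K) (hya : G.Adj y a) : α y ∈ outsideColors G K α b := by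
  by_contra hout
  have hyb : ¬G.Adj y b := fun hyb ↦ h.not_adj_ab y hy ⟨hya, hyb⟩
  have hclosed : IsKempeClosed G (α a) (α y) {b} α := by
    rintro _ s hts rfl - hs
    have := hα hts
    have := h.eq_of_apply_eq hα (x := s) (hy := hy)
    grind [mem_outsideColors, hts.symm]
  refine h.apply_b_ne_of_kempeEquiv hk hreg h3c hy hya hα hab hclosed.kempeEquiv ?_
  simp [kempeSwap, ne_of_mem_of_not_mem hy h.notMem.2.1, hab]

theorem apply_mem_outsideColors (h : CliqueConfig G k a b c d u v K) (hk : 4 ≤ k)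
    (hreg : G.IsRegularOfDegree k) (h3c : ThreeConnected G) (hα : IsProperColoring G k α)
    (hab : α a = α b) (hy : y ∈ K) (hc : G.Adj y c → α c ≠ α a) (hd : G.Adj y d → α d ≠ α a) :
    α y ∈ outsideColors G K α a ∩ outsideColors G K α b := by
  rw [Finset.mem_inter]
  obtain hya | hyb := h.adj_ab y hy
  · exact ⟨h.apply_mem_outsideColors_a hk hreg h3c hα hab hy hya hc hd,
      h.apply_mem_outsideColors_b hk hreg h3c hα hab hy hya⟩
  · rw [hab] at hc hd
    exact ⟨h.swap_left.apply_mem_outsideColors_b hk hreg h3c hα hab.symm hy hyb,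
      h.swap_left.apply_mem_outsideColors_a hk hreg h3c hα hab.symm hy hyb hc hd⟩

theorem exists_ne_notMem_outsideColors (h : CliqueConfig G k a b c d u v K) (hk : 4 ≤ k)
    (hreg : G.IsRegularOfDegree k) (α : V → Fin k) (m₀ : Fin k) :
    ∃ m ≠ m₀, m ∉ outsideColors G K α a ∩ outsideColors G K α b := by
  by_contra! hall
  have ha := card_neighborFinset_inter_le_one hreg fun m hm ↦ (Finset.mem_inter.1 (hall m hm)).1
  have hb := card_neighborFinset_inter_le_one hreg fun m hm ↦ (Finset.mem_inter.1 (hall m hm)).2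
  have hsub : K ⊆ (G.neighborFinset a ∩ K) ∪ (G.neighborFinset b ∩ K) := by
    intro z hz
    simpa [hz, G.adj_comm] using h.adj_ab z hz
  have hle := (Finset.card_le_card hsub).trans (Finset.card_union_le _ _)
  have := h.card_add_one
  omega

theorem apply_c_eq_or_apply_d_eq (h : CliqueConfig G k a b c d u v K) (hk : 4 ≤ k)
    (hreg : G.IsRegularOfDegree k) (h3c : ThreeConnected G) (hα : IsProperColoring G k α)
    (hab : α a = α b) : α c = α a ∨ α d = α a := by
  by_contra! hcd
  obtain ⟨m, hm, hout⟩ := h.exists_ne_notMem_outsideColors hk hreg α (α a)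
  obtain ⟨y, hy, rfl⟩ := h.exists_apply_eq hα hab hm
  exact hout (h.apply_mem_outsideColors hk hreg h3c hα hab hy (fun _ ↦ hcd.1) fun _ ↦ hcd.2)

theorem mem_outsideColors_of_ne (h : CliqueConfig G k a b c d u v K) (hk : 4 ≤ k)
    (hreg : G.IsRegularOfDegree k) (h3c : ThreeConnected G) (hα : IsProperColoring G k α)
    (hab : α a = α b) (hac : α a = α c) (hma : m ≠ α a) (hmd : m ≠ α d) :
    m ∈ outsideColors G K α a ∩ outsideColors G K α b := by
  obtain ⟨y, hy, hyd⟩ := h.exists_adj_d hreg h3c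
  have hclosed : IsKempeClosed G (α y) m K α := h.isKempeClosed_coe hab hac
    (h.apply_ne hα hab hy) hma fun _ _ _ ↦ ⟨(hα hyd).symm, hmd.symm⟩
  have ⟨haK, hbK, _, hdK⟩ := h.notMem
  have hmem := h.apply_mem_outsideColors hk hreg h3c (hclosed.isProperColoring_kempeSwap hα)
    (by simpa [kempeSwap, haK, hbK] using hab) hy
    (fun hyc ↦ absurd ⟨hyc, hyd⟩ (h.not_adj_cd y hy))
    (fun _ ↦ by simpa [kempeSwap, haK, hdK] using h.apply_d_ne hα hab hac)
  rwa [outsideColors_kempeSwap, outsideColors_kempeSwap, kempeSwap, if_pos (by exact hy),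
    Equiv.swap_apply_left] at hmem

theorem apply_a_mem_outsideColors_d (h : CliqueConfig G k a b c d u v K)
    (hα : IsProperColoring G k α) (hab : α a = α b) (hac : α a = α c) :
    α a ∈ outsideColors G K α d := by
  by_contra hout
  have hclosed : IsKempeClosed G (α d) (α a) {d} α := by
    rintro _ s hds rfl - hs
    have := hα hds
    have := h.apply_ne hα hab (y := s)
    grind [mem_outsideColors]
  have hf := hclosed.isProperColoring_kempeSwap hα
  refine h.separated hf hf ?_ ?_ .refl
  · simpa [kempeSwap, h.ad, h.bd] using hab
  · simpa [kempeSwap, h.cd.ne] using hac.symm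

theorem mem_outsideColors_d (h : CliqueConfig G k a b c d u v K) (hk : 4 ≤ k)
    (hreg : G.IsRegularOfDegree k) (h3c : ThreeConnected G) (hα : IsProperColoring G k α)
    (hab : α a = α b) (hac : α a = α c) (hmd : m ≠ α d) : m ∈ outsideColors G K α d := by
  obtain rfl | hma := eq_or_ne m (α a)
  · exact h.apply_a_mem_outsideColors_d hα hab hac
  by_contra hout
  have ⟨haK, hbK, hcK, _⟩ := h.notMem
  have hda := h.apply_d_ne hα hab hac
  have hclosed : IsKempeClosed G (α d) m (insert d (K : Set V)) α := by
    rintro t s hts (rfl | ht) - hs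
    · have := hα hts
      grind [mem_outsideColors]
    · have := h.mem_or_eq ht hts
      grind
  set f := kempeSwap (α d) m (insert d (K : Set V)) α with hf
  have hfa : f a = α a := by simp [hf, kempeSwap, h.ad, haK]
  have hfb : f b = α b := by simp [hf, kempeSwap, h.bd, hbK]
  have hfc : f c = α c := by simp [hf, kempeSwap, h.cd.ne, hcK]
  have hfd : f d = m := by simp [hf, kempeSwap]
  have hsub {e : V} (he : α d ∈ outsideColors G K f e) : α d ∈ outsideColors G K α e := by
    obtain ⟨z, hz, hzK, hfz⟩ := mem_outsideColors.1 he
    have hzd : z ≠ d := by rintro rfl; exact hmd (hfd.symm.trans hfz)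
    refine mem_outsideColors.2 ⟨z, hz, hzK, ?_⟩
    simpa [hf, kempeSwap, hzd, hzK] using hfz
  obtain ⟨m', hm', hm'out⟩ := h.exists_ne_notMem_outsideColors hk hreg α (α a)
  obtain rfl | hm'd := eq_or_ne m' (α d)
  · have hmem := h.mem_outsideColors_of_ne hk hreg h3c (hclosed.isProperColoring_kempeSwap hα)
      (hfa.trans (hab.trans hfb.symm)) (hfa.trans (hac.trans hfc.symm)) (hm'.trans_eq hfa.symm)
      (hmd.symm.trans_eq hfd.symm)
    rw [Finset.mem_inter] at hmem hm'out
    exact hm'out (hmem.imp hsub hsub)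
  · exact hm'out (h.mem_outsideColors_of_ne hk hreg h3c hα hab hac hm' hm'd)

theorem apply_c_ne_of_apply_a_eq_apply_c (h : CliqueConfig G k a b c d u v K) (hk : 4 ≤ k)
    (hreg : G.IsRegularOfDegree k) (h3c : ThreeConnected G) (hα : IsProperColoring G k α)
    (hab : α a = α b) (hac : α a = α c) (hβ : IsProperColoring G k β) (hcd : β c = β d) :
    β c ≠ β a := by
  intro hca
  have hKd : (G.neighborFinset d ∩ K).card ≤ 1 := card_neighborFinset_inter_le_one hreg
    fun m hm ↦ h.mem_outsideColors_d hk hreg h3c hα hab hac hm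
  have hKb : (G.neighborFinset b ∩ K).card ≤ 1 := card_neighborFinset_inter_le_one hreg
    fun m hm ↦ h.symm.mem_outsideColors_d hk hreg h3c hβ hcd hca hm
  have hlt : ((G.neighborFinset d ∩ K) ∪ (G.neighborFinset b ∩ K)).card < K.card := by
    have := Finset.card_union_le (G.neighborFinset d ∩ K) (G.neighborFinset b ∩ K)
    have := h.card_add_one
    omega
  obtain ⟨w, hw, hwdb⟩ := Finset.exists_mem_notMem_of_card_lt_card hlt
  have hwa := h.adj_ab w hw
  have hwc := h.adj_cd w hw
  simp only [Finset.mem_union, Finset.mem_inter, mem_neighborFinset, hw, and_true, not_or,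
    G.adj_comm _ w] at hwdb
  have hel : Eligible G a c := ⟨h.ac, fun hadj ↦ hα hadj hac, w, hwa.resolve_right hwdb.2,
    hwc.resolve_right hwdb.1⟩
  exact h.separated hα hβ hab hcd (hel.kempeEquiv h.pos hreg h3c hα hβ hac hca.symm)

protected theorem false (h : CliqueConfig G k a b c d u v K) (hk : 4 ≤ k)
    (hreg : G.IsRegularOfDegree k) (h3c : ThreeConnected G) : False := by
  obtain ⟨α, hα, hab⟩ := h.ab.exists_isProperColoring h.pos hreg h3c
  obtain ⟨β, hβ, hcd⟩ := h.cd.exists_isProperColoring h.pos hreg h3c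
  wlog hac : α c = α a generalizing c d β
  · exact this h.swap_right β hβ hcd.symm
      ((h.apply_c_eq_or_apply_d_eq hk hreg h3c hα hab).resolve_left hac)
  wlog hca : β a = β c generalizing a b α
  · exact this α hα hab.symm h.swap_left (hac.trans hab)
      ((h.symm.apply_c_eq_or_apply_d_eq hk hreg h3c hβ hcd).resolve_left hca)
  exact h.apply_c_ne_of_apply_a_eq_apply_c hk hreg h3c hα hab hac.symm hβ hcd hca.symm

end CliqueConfig

end CliqueConfigurations

section Reduction

variable {k : ℕ} {G : SimpleGraph V} {a b c d t u v x y : V} {p q : Fin k} {T : Finset V}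
  [Fintype V] [DecidableRel G.Adj]

theorem card_neighborFinset_inter_pair (h : ¬(G.Adj t a ∧ G.Adj t b)) :
    (G.neighborFinset t ∩ {a, b}).card = if G.Adj t a ∨ G.Adj t b then 1 else 0 := by
  by_cases ha : G.Adj t a <;> by_cases hb : G.Adj t b <;>
    simp_all [Finset.inter_insert_of_mem, Finset.inter_insert_of_notMem]

theorem IsPocket.card_add_ite_add_ite (hT : IsPocket G a b c d T)
    (hreg : G.IsRegularOfDegree k) (hcl : G.IsClique (T : Set V)) (hQ : Quad G k a b c d u v)
    (ht : t ∈ T) :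
    T.card + (if G.Adj t a ∨ G.Adj t b then 1 else 0) +
      (if G.Adj t c ∨ G.Adj t d then 1 else 0) = k + 1 := by
  have hdisj : Disjoint (G.neighborFinset t ∩ {a, b}) (G.neighborFinset t ∩ {c, d}) :=
    Finset.disjoint_of_subset_left Finset.inter_subset_right <|
      Finset.disjoint_of_subset_right Finset.inter_subset_right <| by
        simp [hQ.ac.symm, hQ.ad.symm, hQ.bc.symm, hQ.bd.symm]
  rw [← card_neighborFinset_inter_pair (hT.not_adj_ab t ht),
    ← card_neighborFinset_inter_pair (hT.not_adj_cd t ht), add_assoc,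
    ← Finset.card_union_of_disjoint hdisj, ← Finset.inter_union_distrib_left]
  convert hT.card_add_card_eq hreg hcl ht using 4
  grind

theorem IsPocket.extendsTo_pairColoring (hT : IsPocket G a b c d T)
    (hreg : G.IsRegularOfDegree k) (hpq : p ≠ q) (hcl : G.IsClique (T : Set V))
    (hQ : Quad G k a b c d u v)
    (hadj : ∀ t ∈ T, (G.Adj t a ∨ G.Adj t b) ∨ G.Adj t c ∨ G.Adj t d) (hx : x ∈ T) (hy : y ∈ T)
    (hxcd : ¬(G.Adj x c ∨ G.Adj x d)) (hyab : ¬(G.Adj y a ∨ G.Adj y b)) :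
    ExtendsTo G (pairColoring a b p q) {a, b, c, d} T := by
  have ⟨haT, hbT, hcT, hdT⟩ := hT.notMem
  have hpair (z : V) : pairColoring a b p q z = if z = a ∨ z = b then p else q := rfl
  have hne := And.intro hQ.ac (And.intro hQ.ad (And.intro hQ.bc hQ.bd))
  have hprop := isProperOn_pairColoring (G := G) hpq hQ.ab.not_adj hQ.cd.not_adj
  have hpropx := hprop.update (t := x) (e := pairColoring a b p q x) (by grind)
  rw [Function.update_eq_self] at hpropx
  have hpropxy := hpropx.update (t := y) (e := p) (by grind)
  set g := Function.update (pairColoring a b p q) y p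
  have hg {z : V} (hz : z ≠ y) : g z = if z = a ∨ z = b then p else q :=
    Function.update_of_ne hz ..
  have hgy : g y = p := Function.update_self ..
  have hrepeat : ∀ t ∈ T, ∃ s ∈ ({a, b, c, d} : Finset V), G.Adj t s ∧
      ∃ z ∈ ({x, y} : Finset V), g z = g s := by
    intro t ht
    obtain (hta | htb) | htc | htd := hadj t ht
    · exact ⟨a, by simp, hta, y, by grind⟩
    · exact ⟨b, by simp, htb, y, by grind⟩
    · exact ⟨c, by simp, htc, x, by grind⟩
    · exact ⟨d, by simp, htd, x, by grind⟩
  obtain ⟨f, hf₀, hf⟩ := ExtendsTo.of_isClique hreg hT.disjoint hcl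
    (U := {x, y}) (by simp [Finset.insert_subset_iff, hx, hy])
    (by convert hpropxy using 1; grind) hrepeat
  exact ⟨f, fun s hs ↦ (hf₀ s hs).trans (Function.update_of_ne
    (ne_of_mem_of_not_mem hs (Finset.disjoint_left.1 hT.disjoint hy)) ..), hf⟩

theorem Quad.cliqueConfig (hQ : Quad G k a b c d u v) (hreg : G.IsRegularOfDegree k)
    (h3c : ThreeConnected G) (hpq : p ≠ q)
    (hT : IsMinimalObstruction G (pairColoring a b p q) {a, b, c, d} T)
    (hcl : G.IsClique (T : Set V)) : CliqueConfig G k a b c d u v T := by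
  have hpocket := hQ.isPocket hreg hpq hT
  have hcard {t : V} (ht : t ∈ T) := hpocket.card_add_ite_add_ite hreg hcl hQ ht
  obtain ⟨x, hx, hxab⟩ := hpocket.symm.exists_adj_cd h3c hQ.vc hQ.vd
  obtain ⟨y, hy, hycd⟩ := hpocket.exists_adj_cd h3c hQ.ua hQ.ub
  have hTk : T.card + 1 = k := by
    have hxcard := hcard hx
    rw [if_pos hxab] at hxcard
    by_contra hne
    have hTk : T.card = k := by grind
    refine hT.prop.2 (hpocket.extendsTo_pairColoring hreg hpq hcl hQ ?_ hx hy ?_ ?_) <;> grind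
  exact ⟨hQ, hpocket, hTk, hcl, by grind, by grind⟩

protected theorem Quad.false (hQ : Quad G k a b c d u v) (hk : 4 ≤ k)
    (hreg : G.IsRegularOfDegree k) (h3c : ThreeConnected G) : False := by
  have hpq : (⟨0, by omega⟩ : Fin k) ≠ ⟨1, by omega⟩ := by simp
  obtain ⟨a, b, c, d, u, v, T, hQ', hT, hcl⟩ := hQ.exists_isClique (by omega) hreg h3c hpq
  exact (hQ'.cliqueConfig hreg h3c hpq hT hcl).false hk hreg h3c

end Reduction

/-- for `k ≥ 4`, a 3-connected `k`-regular graph of diameter at least 3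
has all its proper `k`-colourings in a single Kempe class. -/
theorem stmt12 {V : Type*} [Fintype V] (k : ℕ) (hk : 4 ≤ k) (G : SimpleGraph V)
    [DecidableRel G.Adj] (hreg : G.IsRegularOfDegree k) (h3c : ThreeConnected G)
    (hdiam : ∃ u v : V, 3 ≤ G.dist u v) : KempeClass G k := by
  intro c c' hc hc'
  by_contra hcc'
  have hk₀ : 0 < k := by omega
  obtain ⟨u, v, huv⟩ := hdiam
  obtain ⟨x, hux, x', hux', hxx', hcx⟩ := exists_adj_adj_apply_eq hreg hc u
  obtain ⟨y, hvy, y', hvy', hyy', hcy⟩ := exists_adj_adj_apply_eq hreg hc' v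
  have hx : Eligible G x x' := ⟨hxx', fun h ↦ hc h hcx, u, hux, hux'⟩
  have hy : Eligible G y y' := ⟨hyy', fun h ↦ hc' h hcy, v, hvy, hvy'⟩
  refine (Quad.of_three_le_dist huv hx hy ?_ hux hux' hvy hvy').false hk hreg h3c
  intro f g hf hg hfx hgy hfg
  exact hcc' ((hx.kempeEquiv hk₀ hreg h3c hc hf hcx hfx).trans
    (hfg.trans (hy.kempeEquiv hk₀ hreg h3c hg hc' hgy hcy)))
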